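/- Let q be a prime power and let n be an odd positive integer coprime to q. Then the following statements are equivalent: (1) all monic irreducible factors of x^n − 1 over F_{q^2} are SCRIM; (2) for each prime divisor l of n, all monic irreducible factors of x^l − 1 over F_{q^2} are SCRIM; (3) for each prime divisor l of n, ord_l(q^2) is odd and ord_l(q) is even. -/

import Mathlib

open Polynomial

/-- The reciprocal polynomial `f*(x) = x^(deg f) * f(0)⁻¹ * f(1/x)`. -/
noncomputable def crecip {F : Type*} [Field F] (f : F[X]) : F[X] :=
  C (f.coeff 0)⁻¹ * f.reverse

/-- The conjugate-reciprocal polynomial `f†`, obtained by applying the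
conjugation `a ↦ a ^ q` to each coefficient of `f*`. -/
noncomputable def cdagger {F : Type*} [Field F] (q : ℕ) (f : F[X]) : F[X] :=
  (crecip f).sum fun i a => C (a ^ q) * X ^ i

/-- A polynomial is SCRIM if it is monic, irreducible, and self-conjugate-reciprocal. -/
def IsSCRIM {F : Type*} [Field F] (q : ℕ) (f : F[X]) : Prop :=
  f.Monic ∧ Irreducible f ∧ f = cdagger q f

/-- The set `Ω_{q²,n}` of SCRIM factors of `x^n - 1` over `F = F_{q²}`. -/
def scrimFactors (F : Type*) [Field F] (q n : ℕ) : Set F[X] :=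
  {f | IsSCRIM q f ∧ f ∣ X ^ n - 1}

/-!
If `α` is a nonzero root of a monic irreducible `f`, then `α⁻¹ ^ q` is a root of `f†`, so `f` is
SCRIM if and only if `α⁻¹ ^ q` is conjugate to `α`. Over the field with `q ^ 2` elements the
conjugates of `α` are the powers `α ^ q ^ (2 * i)`; cancelling the injective `q`-th power map, the
condition becomes `α ^ (q ^ j + 1) = 1` for some odd `j`. Applied to a primitive `n`-th root of
unity, this shows that all factors of `X ^ n - 1` are SCRIM if and only if `n` divides `q ^ j + 1`
for some odd `j`. For odd `n` it is enough to test this on prime divisors `l`, because odd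
exponents can be multiplied and `(x + 1) * m ∣ x ^ m + 1` whenever `m` is an odd divisor of
`x + 1`. For an odd prime `l` it says that `-1` is an odd power of `q` modulo `l`, which is
determined by the parities of the orders of `q` and `q ^ 2`.
-/

/-- `n` is *oddly good* with respect to `q` if it divides `q ^ j + 1` for some odd exponent `j`.
In the literature on good integers, `n` is then said to be oddly good with respect to the pair
`(q, 1)`. It is the arithmetic form of the condition that all monic irreducible factors of
`X ^ n - 1` over the field with `q ^ 2` elements are SCRIM, for `n` coprime to `q`. -/
def IsOddlyGood (q n : ℕ) : Prop :=
  ∃ j, Odd j ∧ n ∣ q ^ j + 1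

namespace IsOddlyGood

variable {q m n : ℕ}

theorem of_dvd (hn : IsOddlyGood q n) (h : m ∣ n) : IsOddlyGood q m :=
  hn.imp fun _ hj => ⟨hj.1, h.trans hj.2⟩

theorem ne_zero (hn : IsOddlyGood q n) : n ≠ 0 :=
  hn.elim fun _ hj => ne_zero_of_dvd_ne_zero (Nat.succ_ne_zero _) hj.2

theorem mul (hm : IsOddlyGood q m) (hn : IsOddlyGood q n) (hodd : Odd m) :
    IsOddlyGood q (m * n) := by
  obtain ⟨i, hi, hmi⟩ := hm
  obtain ⟨j, hj, hnj⟩ := hn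
  have hm_dvd : (m : ℤ) ∣ q ^ (i * j) - -1 := by
    have h := hj.nat_add_dvd_pow_add_pow (q ^ i) 1
    rw [one_pow, ← pow_mul] at h
    rw [sub_neg_eq_add]
    exact_mod_cast hmi.trans h
  have hn_dvd : (n : ℤ) ∣ q ^ (i * j) - -1 := by
    have h := hi.nat_add_dvd_pow_add_pow (q ^ j) 1
    rw [one_pow, ← pow_mul, mul_comm] at h
    rw [sub_neg_eq_add]
    exact_mod_cast hnj.trans h
  -- With `x = q ^ (i * j) ≡ -1`, the cofactor `(x ^ m + 1) / (x + 1)` is a sum of `m` terms that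
  -- are all congruent to `1` modulo `m`.
  have hcofactor := (dvd_geom_sum₂_iff_of_dvd_sub hm_dvd).2 (dvd_mul_right _ _)
  have hmul := mul_dvd_mul hcofactor hn_dvd
  rw [geom_sum₂_mul, hodd.neg_one_pow, sub_neg_eq_add, ← pow_mul] at hmul
  exact ⟨i * j * m, (hi.mul hj).mul hodd, mod_cast hmul⟩

end IsOddlyGood

theorem isOddlyGood_iff_forall_prime {q n : ℕ} (hn : Odd n) :
    IsOddlyGood q n ↔ ∀ l : ℕ, l.Prime → l ∣ n → IsOddlyGood q l := by
  refine ⟨fun h l _ hl => h.of_dvd hl, ?_⟩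
  induction n using Nat.recOnMul with
  | zero => simp at hn
  | one => exact fun _ => ⟨1, odd_one, one_dvd _⟩
  | prime p hp => exact fun h => h p hp dvd_rfl
  | mul a b iha ihb =>
    intro h
    obtain ⟨ha, hb⟩ := Nat.odd_mul.1 hn
    exact (iha ha fun l hl hla => h l hl (hla.mul_right b)).mul
      (ihb hb fun l hl hlb => h l hl (hlb.mul_left a)) ha

theorem exists_odd_pow_eq_neg_one_iff {R : Type*} [Ring R] [NoZeroDivisors R]
    (hR : (-1 : R) ≠ 1) (x : R) :
    (∃ j, Odd j ∧ x ^ j = -1) ↔ Odd (orderOf (x ^ 2)) ∧ Even (orderOf x) := by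
  constructor
  · rintro ⟨j, hj, hxj⟩
    constructor
    · have hsq : (x ^ 2) ^ j = 1 := by rw [pow_right_comm, hxj, neg_one_sq]
      exact hj.of_dvd_nat (orderOf_dvd_of_pow_eq_one hsq)
    · by_contra hodd
      refine hR ?_
      rw [← (Nat.not_even_iff_odd.1 hodd).neg_one_pow, ← hxj, pow_right_comm,
        pow_orderOf_eq_one, one_pow]
  · rintro ⟨hodd, e, he⟩
    have hsq : orderOf (x ^ 2) = e := by
      rw [orderOf_pow' x two_ne_zero, he, ← two_mul, Nat.gcd_mul_right_left,
        Nat.mul_div_cancel_left e two_pos]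
    rw [hsq] at hodd
    have hxe : x ^ e * x ^ e = 1 := by rw [← pow_add, ← he, pow_orderOf_eq_one]
    have hne : x ^ e ≠ 1 := pow_ne_one_of_lt_orderOf hodd.pos.ne' (by have := hodd.pos; omega)
    exact ⟨e, hodd, (mul_self_eq_one_iff.1 hxe).resolve_left hne⟩

theorem isOddlyGood_prime_iff {q l : ℕ} (hl : l.Prime) (hl2 : l ≠ 2) :
    IsOddlyGood q l ↔ Odd (orderOf ((q : ZMod l) ^ 2)) ∧ Even (orderOf (q : ZMod l)) := by
  have : Fact l.Prime := ⟨hl⟩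
  have : Fact (2 < l) := ⟨hl.two_le.lt_of_ne' hl2⟩
  rw [← exists_odd_pow_eq_neg_one_iff ZMod.neg_one_ne_one]
  simp only [IsOddlyGood, ← ZMod.natCast_eq_zero_iff, Nat.cast_add, Nat.cast_pow, Nat.cast_one,
    eq_neg_iff_add_eq_zero]

section Reciprocal

variable {F : Type*} [Field F] {f : F[X]}

theorem monic_crecip (hf : f.coeff 0 ≠ 0) : (crecip f).Monic := by
  rw [Monic, crecip, leadingCoeff_mul, leadingCoeff_C, reverse_leadingCoeff,
    trailingCoeff_eq_coeff_zero hf, inv_mul_cancel₀ hf]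

theorem natDegree_crecip (hf : f.coeff 0 ≠ 0) : (crecip f).natDegree = f.natDegree := by
  rw [crecip, natDegree_C_mul (inv_ne_zero hf), reverse_natDegree,
    natTrailingDegree_eq_zero.2 (Or.inr hf), tsub_zero]

theorem aeval_inv_crecip {E : Type*} [Field E] [Algebra F E] {α : E} (hα : α ≠ 0)
    (h : aeval α f = 0) : aeval α⁻¹ (crecip f) = 0 := by
  have : Invertible α := invertibleOfNonzero hα
  have hrev : aeval α⁻¹ f.reverse = 0 := by
    rw [← invOf_eq_inv]
    exact (eval₂_reverse_eq_zero_iff (algebraMap F E) α f).2 h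
  rw [crecip, map_mul, hrev, mul_zero]

end Reciprocal

section ConjugateReciprocal

variable {F : Type*} [Field F] (p k : ℕ) [ExpChar F p]

theorem cdagger_eq_map_iterateFrobenius (f : F[X]) :
    cdagger (p ^ k) f = (crecip f).map (iterateFrobenius F p k) := by
  simp only [cdagger, Polynomial.map, eval₂_eq_sum, RingHom.comp_apply, iterateFrobenius_def]

variable {E : Type*} [Field E] [Algebra F E]

theorem aeval_pow_cdagger (f : F[X]) (x : E) :
    aeval (x ^ p ^ k) (cdagger (p ^ k) f) = aeval x (crecip f) ^ p ^ k := by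
  have : ExpChar E p := expChar_of_injective_algebraMap (algebraMap F E).injective p
  have hcomm : (algebraMap F E).comp (iterateFrobenius F p k) =
      (iterateFrobenius E p k).comp (algebraMap F E) :=
    RingHom.ext fun a => by simp [iterateFrobenius_def]
  rw [cdagger_eq_map_iterateFrobenius, aeval_def, eval₂_map, hcomm, ← iterateFrobenius_def,
    ← hom_eval₂, iterateFrobenius_def, ← aeval_def]

theorem isSCRIM_minpoly_iff_isConjRoot {α : E} (hintegral : IsIntegral F α) (hα : α ≠ 0) :
    IsSCRIM (p ^ k) (minpoly F α) ↔ IsConjRoot F α (α⁻¹ ^ p ^ k) := by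
  have hroot : aeval (α⁻¹ ^ p ^ k) (cdagger (p ^ k) (minpoly F α)) = 0 := by
    rw [aeval_pow_cdagger, aeval_inv_crecip hα (minpoly.aeval F α),
      zero_pow (expChar_pow_pos F p k).ne']
  refine ⟨fun h => (isConjRoot_iff_aeval_eq_zero hintegral).2 (by rwa [h.2.2]), fun h => ?_⟩
  refine ⟨minpoly.monic hintegral, minpoly.irreducible hintegral, ?_⟩
  have hcoeff : (minpoly F α).coeff 0 ≠ 0 := minpoly.coeff_zero_ne_zero hintegral hα
  have hdvd : minpoly F α ∣ cdagger (p ^ k) (minpoly F α) :=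
    (isConjRoot_def.1 h).dvd.trans (minpoly.dvd F _ hroot)
  rw [cdagger_eq_map_iterateFrobenius] at hdvd ⊢
  refine (eq_of_monic_of_dvd_of_natDegree_le (minpoly.monic hintegral)
    ((monic_crecip hcoeff).map _) hdvd ?_).symm
  rw [natDegree_map, natDegree_crecip hcoeff]

end ConjugateReciprocal

theorem isConjRoot_iff_exists_eq_pow_card_pow {F E : Type*} [Field F] [Fintype F] [Field E]
    [Finite E] [Algebra F E] {x y : E} :
    IsConjRoot F x y ↔ ∃ i, y = x ^ Fintype.card F ^ i := by
  rw [IsConjRoot.comm, isConjRoot_iff_exists_algEquiv]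
  constructor
  · rintro ⟨σ, rfl⟩
    obtain ⟨i, rfl⟩ := (FiniteField.bijective_frobeniusAlgEquivOfAlgebraic_pow F E).2 σ
    exact ⟨i, by rw [AlgEquiv.coe_pow, FiniteField.coe_frobeniusAlgEquivOfAlgebraic_iterate]⟩
  · rintro ⟨i, rfl⟩
    exact ⟨FiniteField.frobeniusAlgEquivOfAlgebraic F E ^ i,
      by rw [AlgEquiv.coe_pow, FiniteField.coe_frobeniusAlgEquivOfAlgebraic_iterate]⟩

theorem exists_inv_pow_eq_pow_iff_isOddlyGood {E : Type*} [Field E] (p k : ℕ) [ExpChar E p]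
    {x : E} (hx : x ≠ 0) :
    (∃ i, x⁻¹ ^ p ^ k = x ^ ((p ^ k) ^ 2) ^ i) ↔ IsOddlyGood (p ^ k) (orderOf x) := by
  have hinv (N : ℕ) : x⁻¹ ^ p ^ k = x ^ N ↔ x ^ (N + p ^ k) = 1 := by
    rw [inv_pow, eq_comm, ← mul_eq_one_iff_eq_inv₀ (pow_ne_zero _ hx), pow_add]
  have hsucc (i : ℕ) : x⁻¹ ^ p ^ k = x ^ ((p ^ k) ^ 2) ^ (i + 1) ↔
      orderOf x ∣ (p ^ k) ^ (2 * i + 1) + 1 := by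
    have hexp : ((p ^ k) ^ 2) ^ (i + 1) + p ^ k = p ^ k * ((p ^ k) ^ (2 * i + 1) + 1) := by ring
    rw [hinv, hexp, ExpChar.pow_prime_pow_mul_eq_one_iff, orderOf_dvd_iff_pow_eq_one]
  constructor
  · rintro ⟨_ | i, hi⟩
    · rw [hinv, pow_zero, add_comm, ← orderOf_dvd_iff_pow_eq_one] at hi
      exact ⟨1, odd_one, by rwa [pow_one]⟩
    · exact ⟨2 * i + 1, ⟨i, rfl⟩, (hsucc i).1 hi⟩
  · rintro ⟨_, ⟨i, rfl⟩, hi⟩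
    exact ⟨i + 1, (hsucc i).2 hi⟩

theorem exists_expChar_and_eq_pow_of_dvd_card {F : Type*} [Field F] [Fintype F] {q : ℕ}
    (h : q ∣ Fintype.card F) : ∃ p k, ExpChar F p ∧ q = p ^ k := by
  obtain ⟨p, _⟩ := CharP.exists F
  obtain ⟨m, hp, hcard⟩ := FiniteField.card F p
  obtain ⟨k, -, hk⟩ := (Nat.dvd_prime_pow hp).1 (hcard ▸ h)
  exact ⟨p, k, .prime hp, hk⟩

section FiniteBaseField

variable {F : Type*} [Field F] [Fintype F] {q n : ℕ}

theorem isSCRIM_minpoly_iff_isOddlyGood (hF : Fintype.card F = q ^ 2) {E : Type*} [Field E]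
    [Finite E] [Algebra F E] {α : E} (hα : α ≠ 0) :
    IsSCRIM q (minpoly F α) ↔ IsOddlyGood q (orderOf α) := by
  obtain ⟨p, k, _, rfl⟩ := exists_expChar_and_eq_pow_of_dvd_card (hF ▸ dvd_pow_self q two_ne_zero)
  have : ExpChar E p := expChar_of_injective_algebraMap (algebraMap F E).injective p
  rw [isSCRIM_minpoly_iff_isConjRoot p k (.of_finite F α) hα,
    isConjRoot_iff_exists_eq_pow_card_pow, hF, exists_inv_pow_eq_pow_iff_isOddlyGood p k hα]

theorem natCast_ne_zero_of_coprime_card (h : n.Coprime (Fintype.card F)) : (n : F) ≠ 0 := by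
  intro h0
  have hcop : IsCoprime (n : F) (Fintype.card F : F) := h.cast
  rw [h0, FiniteField.cast_card_eq_zero] at hcop
  exact not_isCoprime_zero_zero hcop

theorem IsOddlyGood.isSCRIM_of_dvd_X_pow_sub_one (hF : Fintype.card F = q ^ 2)
    (hn : IsOddlyGood q n) {f : F[X]} (hmonic : f.Monic) (hirr : Irreducible f)
    (hdvd : f ∣ X ^ n - 1) : IsSCRIM q f := by
  have : Fact (Irreducible f) := ⟨hirr⟩
  have : Module.Finite F (AdjoinRoot f) := hmonic.finite_adjoinRoot
  have : Finite (AdjoinRoot f) := Module.finite_of_finite F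
  let α := AdjoinRoot.root f
  have hroot : aeval α f = 0 := by rw [AdjoinRoot.aeval_eq, AdjoinRoot.mk_self]
  have hpow : α ^ n = 1 := by
    simpa [sub_eq_zero] using aeval_eq_zero_of_dvd_aeval_eq_zero hdvd hroot
  rw [minpoly.eq_of_irreducible_of_monic hirr hroot hmonic,
    isSCRIM_minpoly_iff_isOddlyGood hF (IsUnit.of_pow_eq_one hpow hn.ne_zero).ne_zero]
  exact hn.of_dvd (orderOf_dvd_of_pow_eq_one hpow)

theorem forall_isSCRIM_iff_isOddlyGood (hF : Fintype.card F = q ^ 2) (hn : n.Coprime q) :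
    (∀ f : F[X], f.Monic → Irreducible f → f ∣ X ^ n - 1 → IsSCRIM q f) ↔ IsOddlyGood q n := by
  refine ⟨fun h => ?_, fun h f => h.isSCRIM_of_dvd_X_pow_sub_one hF⟩
  have : NeZero (n : F) := ⟨natCast_ne_zero_of_coprime_card (hF ▸ hn.pow_right 2)⟩
  have : NeZero n := .of_neZero_natCast F
  have : FiniteDimensional F (CyclotomicField n F) :=
    IsCyclotomicExtension.finiteDimensional {n} F _
  have : Finite (CyclotomicField n F) := Module.finite_of_finite F
  have hζ := IsCyclotomicExtension.zeta_spec n F (CyclotomicField n F)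
  have hintegral := IsIntegral.of_finite F (IsCyclotomicExtension.zeta n F (CyclotomicField n F))
  rw [hζ.eq_orderOf, ← isSCRIM_minpoly_iff_isOddlyGood hF (hζ.ne_zero (NeZero.ne n))]
  exact h _ (minpoly.monic hintegral) (minpoly.irreducible hintegral)
    (minpoly.dvd F _ (by simp [hζ.pow_eq_one]))

end FiniteBaseField

theorem stmt5 {q n : ℕ} (hq : IsPrimePow q)
    {F : Type*} [Field F] [Fintype F] (hF : Fintype.card F = q ^ 2)
    (hn : Odd n) (hgcd : Nat.Coprime n q) :
    ((∀ f : F[X], f.Monic → Irreducible f → f ∣ X ^ n - 1 → IsSCRIM q f) ↔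
       (∀ l : ℕ, l.Prime → l ∣ n →
         ∀ f : F[X], f.Monic → Irreducible f → f ∣ X ^ l - 1 → IsSCRIM q f)) ∧
    ((∀ l : ℕ, l.Prime → l ∣ n →
         ∀ f : F[X], f.Monic → Irreducible f → f ∣ X ^ l - 1 → IsSCRIM q f) ↔
       (∀ l : ℕ, l.Prime → l ∣ n →
         Odd (orderOf ((q : ZMod l) ^ 2)) ∧ Even (orderOf (q : ZMod l)))) := by
  have hfactors : (∀ l : ℕ, l.Prime → l ∣ n →
      ∀ f : F[X], f.Monic → Irreducible f → f ∣ X ^ l - 1 → IsSCRIM q f) ↔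
      ∀ l : ℕ, l.Prime → l ∣ n → IsOddlyGood q l :=
    forall₃_congr fun l _ hln => forall_isSCRIM_iff_isOddlyGood hF (hgcd.of_dvd_left hln)
  have horders : (∀ l : ℕ, l.Prime → l ∣ n → IsOddlyGood q l) ↔ ∀ l : ℕ, l.Prime → l ∣ n →
      Odd (orderOf ((q : ZMod l) ^ 2)) ∧ Even (orderOf (q : ZMod l)) :=
    forall₃_congr fun l hl hln =>
      isOddlyGood_prime_iff hl (hn.ne_two_of_dvd_nat hln)
  rw [forall_isSCRIM_iff_isOddlyGood hF hgcd, isOddlyGood_iff_forall_prime hn, hfactors]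
  exact ⟨Iff.rfl, horders⟩
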